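/- Consider a simultaneous second price auction where every bidder has a fractionally subadditive (XOS) valuation and a budget. If b is a pure Nash equilibrium within the class of strategies satisfying no over-bidding and no over-budgeting (b itself satisfies both, and no bidder can increase her utility by any deviation b'_i satisfying both), then LW(b) ≥ OPT/2. -/

import Mathlib

/-!
Pure Nash equilibria of simultaneous second price auctions with fractionally
subadditive (XOS) budgeted bidders, within the class of no over-bidding and no
over-budgeting strategies, have Liquid Welfare at least half of the optimal
Liquid Welfare.
-/

open Finset

/-- `v` is fractionally subadditive (XOS): the pointwise maximum of a finite
nonempty family of (nonnegative) additive valuations. -/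
def IsXOS {m : ℕ} (v : Finset (Fin m) → ℝ) : Prop :=
  ∃ (k : ℕ) (a : Fin (k + 1) → Fin m → ℝ),
    (∀ t j, 0 ≤ a t j) ∧
    ∀ S : Finset (Fin m),
      v S = (Finset.univ : Finset (Fin (k + 1))).sup'
        ⟨0, Finset.mem_univ 0⟩ (fun t => ∑ j ∈ S, a t j)

/-- A simultaneous second price auction on `m` indivisible items with `n` bidders:
monotone normalized valuations `v i`, budgets `B i ≥ 0`, and a deterministic
allocation rule `win` awarding every item to a bidder with the highest bid on it;
the winner of an item pays the highest competing bid on it. -/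
structure ItemAuctionSP (n m : ℕ) where
  v : Fin n → Finset (Fin m) → ℝ
  v_empty : ∀ i, v i ∅ = 0
  v_mono : ∀ i (S T : Finset (Fin m)), S ⊆ T → v i S ≤ v i T
  B : Fin n → ℝ
  B_nonneg : ∀ i, 0 ≤ B i
  win : (Fin n → Fin m → ℝ) → Fin m → Fin n
  win_max : ∀ (b : Fin n → Fin m → ℝ) (j : Fin m) (i : Fin n), b i j ≤ b (win b j) j

namespace ItemAuctionSP

variable {n m : ℕ}

/-- The highest competing bid `max_{k ≠ i} b_{kj}` (bids are nonnegative). -/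
noncomputable def maxOther (b : Fin n → Fin m → ℝ) (i : Fin n) (j : Fin m) : ℝ :=
  Finset.fold max 0 (fun k => b k j) (univ.erase i)

/-- The set of items bidder `i` wins under profile `b`. -/
def won (A : ItemAuctionSP n m) (i : Fin n) (b : Fin n → Fin m → ℝ) : Finset (Fin m) :=
  univ.filter fun j => A.win b j = i

/-- Second-price payment of bidder `i`: the highest competing bid on each item won. -/
noncomputable def pay (A : ItemAuctionSP n m) (i : Fin n) (b : Fin n → Fin m → ℝ) : ℝ :=
  ∑ j ∈ A.won i b, maxOther b i j

/-- Quasilinear utility of bidder `i`. -/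
noncomputable def util (A : ItemAuctionSP n m) (i : Fin n) (b : Fin n → Fin m → ℝ) : ℝ :=
  A.v i (A.won i b) - A.pay i b

/-- Liquid Welfare of a pure bid profile. -/
noncomputable def LW (A : ItemAuctionSP n m) (b : Fin n → Fin m → ℝ) : ℝ :=
  ∑ i, min (A.v i (A.won i b)) (A.B i)

/-- No over-bidding: `Σ_{j∈S} b_{ij} ≤ v_i(S)` for every set `S`. -/
def NoOverbid (A : ItemAuctionSP n m) (i : Fin n) (bi : Fin m → ℝ) : Prop :=
  ∀ S : Finset (Fin m), ∑ j ∈ S, bi j ≤ A.v i S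

/-- No over-budgeting: bids sum to at most the budget. -/
def NoOverbudget (A : ItemAuctionSP n m) (i : Fin n) (bi : Fin m → ℝ) : Prop :=
  (∑ j : Fin m, bi j) ≤ A.B i

end ItemAuctionSP

/-!
Let `M_ij` be the highest bid on item `j` among the rivals of bidder `i`. In a second price auction
the set that bidder `i` wins with bids `β` maximizes `∑_{j ∈ T} (β j - M_ij)` over all `T`, so a `β`
without over-bidding guarantees her utility at least `∑_{j ∈ T} (β j - M_ij)` for every `T`.

Bidder `i` compares `b` with bidding, on the set `T_i` assigned to her by the optimum, the additive
valuation supporting `v_i(T_i)`, scaled down to total `min {v_i(T_i), B_i}` so that it fits into her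
budget. At equilibrium `min {v_i(T_i), B_i} ≤ u_i(b) + ∑_{j ∈ T_i} M_ij`, and
`u_i(b) ≤ v_i(x_i(b))`; the left side is also at most `B_i`, so `u_i(b)` may be replaced by
`min {v_i(x_i(b)), B_i}`. Summing over the bidders, the first terms add up to `LW(b)`, and the
second ones to at most the sum of all winning bids, which is again at most `LW(b)`.
-/

namespace IsXOS

variable {m : ℕ} {v : Finset (Fin m) → ℝ}

theorem exists_supporting_additive (hv : IsXOS v) (T : Finset (Fin m)) :
    ∃ a : Fin m → ℝ, (∀ j, 0 ≤ a j) ∧ (∀ j ∉ T, a j = 0) ∧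
      (∀ R, ∑ j ∈ R, a j ≤ v R) ∧ ∑ j ∈ T, a j = v T := by
  obtain ⟨k, a, ha_nonneg, hva⟩ := hv
  obtain ⟨t, -, ht⟩ := exists_mem_eq_sup' ⟨0, mem_univ (0 : Fin (k + 1))⟩ fun t => ∑ j ∈ T, a t j
  refine ⟨fun j => if j ∈ T then a t j else 0, fun j => ?_, fun j hj => if_neg hj, fun R => ?_, ?_⟩
  · exact ite_nonneg (ha_nonneg t j) le_rfl
  · calc ∑ j ∈ R, (if j ∈ T then a t j else 0)
        ≤ ∑ j ∈ R, a t j :=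
          sum_le_sum fun j _ => (ite_le_sup _ _ _).trans (sup_le le_rfl (ha_nonneg t j))
      _ ≤ v R := hva R ▸ le_sup' (fun t => ∑ j ∈ R, a t j) (mem_univ t)
  · rw [sum_ite_mem, inter_self, hva T, ht]

theorem exists_additive_sum_eq (hv : IsXOS v) {T : Finset (Fin m)} {x : ℝ} (hx : 0 ≤ x)
    (hxT : x ≤ v T) :
    ∃ β : Fin m → ℝ, (∀ j, 0 ≤ β j) ∧ (∀ j ∉ T, β j = 0) ∧
      (∀ R, ∑ j ∈ R, β j ≤ v R) ∧ ∑ j ∈ T, β j = x := by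
  obtain ⟨a, ha_nonneg, ha_zero, ha_le, ha_eq⟩ := hv.exists_supporting_additive T
  have hvT : 0 ≤ v T := hx.trans hxT
  -- If `v T = 0`, then `x = 0` too, and the junk value `x / 0 = 0` is the right scaling factor.
  have hscale_nonneg : 0 ≤ x / v T := div_nonneg hx hvT
  have hscale_le_one : x / v T ≤ 1 := div_le_one_of_le₀ hxT hvT
  refine ⟨fun j => x / v T * a j, fun j => mul_nonneg hscale_nonneg (ha_nonneg j),
    fun j hj => by simp [ha_zero j hj], fun R => ?_, ?_⟩
  · exact (sum_le_sum fun j _ => mul_le_of_le_one_left (ha_nonneg j) hscale_le_one).trans (ha_le R)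
  · rw [← mul_sum, ha_eq]
    exact div_mul_cancel_of_imp fun h => le_antisymm (h ▸ hxT) hx

end IsXOS

namespace ItemAuctionSP

variable {n m : ℕ} (A : ItemAuctionSP n m) {b : Fin n → Fin m → ℝ} {i : Fin n} {j : Fin m}

/-- The winner's own bid on item `j`, i.e. the highest bid on `j`; she pays `maxOther` instead. -/
def winningBid (b : Fin n → Fin m → ℝ) (j : Fin m) : ℝ :=
  b (A.win b j) j

/-- Bidder `i` cannot gain by a deviation to nonnegative bids without over-bidding and
over-budgeting; that `b i` itself is of this kind is a separate condition. -/
def IsBestResponse (i : Fin n) (b : Fin n → Fin m → ℝ) : Prop :=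
  ∀ b' : Fin m → ℝ, (∀ j, 0 ≤ b' j) → A.NoOverbid i b' → A.NoOverbudget i b' →
    A.util i (Function.update b i b') ≤ A.util i b

theorem mem_won : j ∈ A.won i b ↔ A.win b j = i := by
  simp [won]

theorem value_nonneg (i : Fin n) (T : Finset (Fin m)) : 0 ≤ A.v i T :=
  A.v_empty i ▸ A.v_mono i ∅ T (empty_subset T)

theorem maxOther_nonneg (b : Fin n → Fin m → ℝ) (i : Fin n) (j : Fin m) : 0 ≤ maxOther b i j :=
  le_fold_max _ |>.2 (Or.inl le_rfl)

theorem le_maxOther {k : Fin n} (hk : k ≠ i) : b k j ≤ maxOther b i j :=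
  le_fold_max _ |>.2 (Or.inr ⟨k, mem_erase.2 ⟨hk, mem_univ k⟩, le_rfl⟩)

theorem maxOther_update_self (β : Fin m → ℝ) :
    maxOther (Function.update b i β) i j = maxOther b i j :=
  fold_congr fun k hk => by rw [Function.update_of_ne (ne_of_mem_erase hk)]

theorem maxOther_le_winningBid (h : 0 ≤ A.winningBid b j) : maxOther b i j ≤ A.winningBid b j :=
  fold_max_le _ |>.2 ⟨h, fun k _ => A.win_max b j k⟩

theorem maxOther_le_of_mem_won (hij : 0 ≤ b i j) (hj : j ∈ A.won i b) : maxOther b i j ≤ b i j := by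
  obtain rfl := A.mem_won.1 hj
  exact A.maxOther_le_winningBid hij

theorem le_maxOther_of_notMem_won (hj : j ∉ A.won i b) : b i j ≤ maxOther b i j :=
  (A.win_max b j i).trans (le_maxOther fun h => hj (A.mem_won.2 h))

theorem sum_sub_maxOther_le_sum_won (hb : ∀ j, 0 ≤ b i j) (T : Finset (Fin m)) :
    ∑ j ∈ T, (b i j - maxOther b i j) ≤ ∑ j ∈ A.won i b, (b i j - maxOther b i j) := by
  calc ∑ j ∈ T, (b i j - maxOther b i j)
      = ∑ j ∈ T ∩ A.won i b, (b i j - maxOther b i j)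
          + ∑ j ∈ T \ A.won i b, (b i j - maxOther b i j) := (sum_inter_add_sum_sdiff _ _ _).symm
    _ ≤ ∑ j ∈ T ∩ A.won i b, (b i j - maxOther b i j) :=
        add_le_of_nonpos_right <| sum_nonpos fun j hj =>
          sub_nonpos.2 (A.le_maxOther_of_notMem_won (mem_sdiff.1 hj).2)
    _ ≤ ∑ j ∈ A.won i b, (b i j - maxOther b i j) :=
        sum_le_sum_of_subset_of_nonneg inter_subset_right fun j hj _ =>
          sub_nonneg.2 (A.maxOther_le_of_mem_won (hb j) hj)

theorem sum_sub_maxOther_le_util (hb : ∀ j, 0 ≤ b i j) (hnob : A.NoOverbid i (b i))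
    (T : Finset (Fin m)) : ∑ j ∈ T, (b i j - maxOther b i j) ≤ A.util i b := by
  calc ∑ j ∈ T, (b i j - maxOther b i j)
      ≤ ∑ j ∈ A.won i b, (b i j - maxOther b i j) := A.sum_sub_maxOther_le_sum_won hb T
    _ = ∑ j ∈ A.won i b, b i j - A.pay i b := sum_sub_distrib _ _
    _ ≤ A.util i b := sub_le_sub_right (hnob _) _

theorem util_le_value (i : Fin n) (b : Fin n → Fin m → ℝ) : A.util i b ≤ A.v i (A.won i b) :=
  sub_le_self _ (sum_nonneg fun j _ => maxOther_nonneg b i j)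

variable {A}

theorem IsBestResponse.min_value_budget_le_util_add_sum_maxOther (h : A.IsBestResponse i b)
    (hXOS : IsXOS (A.v i)) (T : Finset (Fin m)) :
    min (A.v i T) (A.B i) ≤ A.util i b + ∑ j ∈ T, maxOther b i j := by
  obtain ⟨β, hβ_nonneg, hβ_zero, hβ_nob, hβ_sum⟩ := hXOS.exists_additive_sum_eq
    (le_min (A.value_nonneg i T) (A.B_nonneg i)) (min_le_left (A.v i T) (A.B i))
  have hβ_nobud : A.NoOverbudget i β := by
    rw [NoOverbudget, ← sum_subset (subset_univ T) fun j _ hj => hβ_zero j hj, hβ_sum]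
    exact min_le_right _ _
  have hdev : ∑ j ∈ T, (β j - maxOther b i j) ≤ A.util i (Function.update b i β) := by
    simpa only [Function.update_self, maxOther_update_self] using
      A.sum_sub_maxOther_le_util (b := Function.update b i β) (i := i)
        (by simpa only [Function.update_self] using hβ_nonneg)
        (by rw [Function.update_self]; exact hβ_nob) T
  have heq : A.util i (Function.update b i β) ≤ A.util i b := h β hβ_nonneg hβ_nob hβ_nobud
  rw [sum_sub_distrib, hβ_sum] at hdev
  exact sub_le_iff_le_add.1 (hdev.trans heq)

theorem IsBestResponse.min_value_budget_le_add_sum_maxOther (h : A.IsBestResponse i b)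
    (hXOS : IsXOS (A.v i)) (T : Finset (Fin m)) :
    min (A.v i T) (A.B i) ≤ min (A.v i (A.won i b)) (A.B i) + ∑ j ∈ T, maxOther b i j := by
  rw [← min_add_add_right]
  refine le_min ?_ ?_
  · calc min (A.v i T) (A.B i)
        ≤ A.util i b + ∑ j ∈ T, maxOther b i j :=
          h.min_value_budget_le_util_add_sum_maxOther hXOS T
      _ ≤ A.v i (A.won i b) + ∑ j ∈ T, maxOther b i j := by
          gcongr
          exact A.util_le_value i b
  · calc min (A.v i T) (A.B i)
        ≤ A.B i := min_le_right _ _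
      _ ≤ A.B i + ∑ j ∈ T, maxOther b i j :=
          le_add_of_nonneg_right (sum_nonneg fun j _ => maxOther_nonneg b i j)

theorem sum_maxOther_le_sum_winningBid (hb : ∀ j, 0 ≤ A.winningBid b j) (S : Fin m → Fin n) :
    ∑ i, ∑ j with S j = i, maxOther b i j ≤ ∑ j, A.winningBid b j := by
  rw [← sum_fiberwise univ S]
  exact sum_le_sum fun i _ => sum_le_sum fun j _ => A.maxOther_le_winningBid (hb j)

theorem sum_winningBid_le_LW
    (hb : ∀ i, ∑ j ∈ A.won i b, b i j ≤ min (A.v i (A.won i b)) (A.B i)) :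
    ∑ j, A.winningBid b j ≤ A.LW b := by
  calc ∑ j, A.winningBid b j
      = ∑ i, ∑ j ∈ A.won i b, A.winningBid b j := (sum_fiberwise univ (A.win b) _).symm
    _ = ∑ i, ∑ j ∈ A.won i b, b i j :=
        sum_congr rfl fun i _ => sum_congr rfl fun j hj => by rw [winningBid, A.mem_won.1 hj]
    _ ≤ A.LW b := sum_le_sum fun i _ => hb i

end ItemAuctionSP

open ItemAuctionSP in
theorem liquid_poa_pure_second_price_general {n m : ℕ} (A : ItemAuctionSP n m)
    (hXOS : ∀ i, IsXOS (A.v i))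
    (b : Fin n → Fin m → ℝ) (hb_nonneg : ∀ i j, 0 ≤ b i j)
    (hb_won : ∀ i, ∑ j ∈ A.won i b, b i j ≤ min (A.v i (A.won i b)) (A.B i))
    (hNash : ∀ i, A.IsBestResponse i b) (S : Fin m → Fin n) :
    ∑ i, min (A.v i (univ.filter fun j => S j = i)) (A.B i) ≤ 2 * A.LW b := by
  calc ∑ i, min (A.v i (univ.filter fun j => S j = i)) (A.B i)
      ≤ ∑ i, (min (A.v i (A.won i b)) (A.B i) + ∑ j with S j = i, maxOther b i j) :=
        sum_le_sum fun i _ => (hNash i).min_value_budget_le_add_sum_maxOther (hXOS i) _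
    _ = A.LW b + ∑ i, ∑ j with S j = i, maxOther b i j := sum_add_distrib
    _ ≤ A.LW b + ∑ j, A.winningBid b j := by
        gcongr
        exact sum_maxOther_le_sum_winningBid (fun j => hb_nonneg _ j) S
    _ ≤ A.LW b + A.LW b := by
        gcongr
        exact sum_winningBid_le_LW hb_won
    _ = 2 * A.LW b := (two_mul _).symm

/-- **Liquid price of anarchy of pure Nash equilibria of simultaneous second price
auctions with XOS bidders**: if `b` satisfies no over-bidding and no over-budgeting
and no bidder can increase her utility by a deviation satisfying both, then the
Liquid Welfare of every allocation (in particular the optimal one) is at most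
`2 · LW(b)`. -/
theorem liquid_poa_pure_second_price {n m : ℕ} (A : ItemAuctionSP n m)
    (hXOS : ∀ i, IsXOS (A.v i))
    (b : Fin n → Fin m → ℝ) (hb_nonneg : ∀ i j, 0 ≤ b i j)
    (hb_nob : ∀ i, A.NoOverbid i (b i))
    (hb_nobud : ∀ i, A.NoOverbudget i (b i))
    (hNash : ∀ i (b' : Fin m → ℝ), (∀ j, 0 ≤ b' j) →
      A.NoOverbid i b' → A.NoOverbudget i b' →
      A.util i (Function.update b i b') ≤ A.util i b)
    (S : Fin m → Fin n) :
    ∑ i, min (A.v i (univ.filter fun j => S j = i)) (A.B i) ≤ 2 * A.LW b :=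
  liquid_poa_pure_second_price_general A hXOS b hb_nonneg (fun i => le_min (hb_nob i _)
    ((sum_le_univ_sum_of_nonneg (hb_nonneg i)).trans (hb_nobud i))) hNash S
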